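/- Let n ≥ 0 and let v_i = (p(a + i·b), q(a + i·b)) ∈ ℝ² for i = 0, …, n+2, where p, q ∈ ℝ[t] are polynomials of degree at most 2 with {p, q, 1} linearly independent in ℝ[t], and a, b ∈ ℝ with b ≠ 0. Let f_0, …, f_{n+2} ∈ ℝ^{n+2} be affinely independent (the vertices of an (n+2)-dimensional simplex). Then all GKZ vectors of triangulations of the configuration {v_0, …, v_{n+2}} lie on a common ellipsoid: there exist an invertible affine map M : ℝ^{n+2} → ℝ^{n+2} and a real number r > 0 such that ‖M(GKZ(T))‖ = r for every triangulation T. -/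

import Mathlib

open MeasureTheory

/-- Area (2-dimensional Lebesgue measure) of the convex hull of the points
indexed by `σ`. -/
noncomputable def triArea {m : ℕ} (v : Fin m → ℝ × ℝ) (σ : Finset (Fin m)) : ℝ :=
  (volume (convexHull ℝ (v '' ↑σ))).toReal

/-- `T` is a triangulation of the planar point configuration `v`:
a finite set of affinely independent triples whose convex hulls cover the
convex hull of the configuration, any two of which meet in a common
(extreme) face of each. -/
def IsTriangulation {m : ℕ} (v : Fin m → ℝ × ℝ) (T : Finset (Finset (Fin m))) : Prop :=
  (∀ σ ∈ T, σ.card = 3 ∧ AffineIndependent ℝ (fun i : {x // x ∈ σ} => v i.1)) ∧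
  (⋃ σ ∈ T, convexHull ℝ (v '' ↑σ)) = convexHull ℝ (Set.range v) ∧
  ∀ σ ∈ T, ∀ τ ∈ T,
    IsExtreme ℝ (convexHull ℝ (v '' ↑σ)) (convexHull ℝ (v '' ↑σ) ∩ convexHull ℝ (v '' ↑τ)) ∧
    IsExtreme ℝ (convexHull ℝ (v '' ↑τ)) (convexHull ℝ (v '' ↑σ) ∩ convexHull ℝ (v '' ↑τ))

/-- The GKZ vector of a triangulation `T` with respect to the vectors `f i`:
`GKZ(T) = ∑ i (∑ {σ ∈ T : i ∈ σ} vol σ) • f i`. -/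
noncomputable def GKZ {m : ℕ} {E : Type*} [AddCommGroup E] [Module ℝ E]
    (v : Fin m → ℝ × ℝ) (f : Fin m → E) (T : Finset (Finset (Fin m))) : E :=
  ∑ i, (∑ σ ∈ T.filter (fun σ => i ∈ σ), triArea v σ) • f i

/-!
An affine map carries the equally spaced parabola `k ↦ (k, k ^ 2)` to the configuration `v`, so
that, up to a common factor `C`, the triangle `{x < y < z}` has area `(y - x) * (z - y) * (z - x)`.
Since the points are in convex position, removing the triangle on the edge `0 L` splits a
triangulation of the polygon `0 < 1 < ⋯ < L` into two smaller ones.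

In the affine coordinates in which `∑ i, z i • f i` becomes the vector of partial sums
`F k = ∑ i ≤ k, z i`, the squared norm of a GKZ vector is `∑ k, F k ^ 2`. The partial sums behave
well under the splitting at the apex `b`: `F` is the partial sum function of the left piece shifted
by a constant on `[0, b)`, and that of the right piece shifted by a constant on `[b, L)`. Hence
`∑ F` and `∑ F ^ 2` are computed by recursion, and they turn out to be polynomials in `L` alone.
-/

section PolygonTriangulation

open Finset

variable {α : Type*} [LinearOrder α]

/-- A family of vertex sets of a convex polygon, whose vertices carry their order along the
boundary, is noncrossing if no chord joining two points of one member crosses a chord joining two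
points of another. -/
def NonCrossing (T : Finset (Finset α)) : Prop :=
  ∀ σ ∈ T, ∀ τ ∈ T, ∀ x ∈ σ, ∀ y ∈ σ, ∀ u ∈ τ, ∀ w ∈ τ, ¬(x < u ∧ u < y ∧ y < w)

lemma NonCrossing.mono {S T : Finset (Finset α)} (hT : NonCrossing T) (hST : S ⊆ T) :
    NonCrossing S :=
  fun σ hσ τ hτ ↦ hT σ (hST hσ) τ (hST hτ)

/-- The triangulations of the convex polygon with vertices `a < ⋯ < c`, generated by gluing a
triangle `{a, b, c}` onto triangulations of the polygons cut off by its edges `ab` and `bc`. A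
single edge counts as a polygon, with the empty triangulation. -/
inductive IsPolygonTriangulation : α → α → Finset (Finset α) → Prop
  | edge {a c : α} (h : a ⋖ c) : IsPolygonTriangulation a c ∅
  | glue {a b c : α} {S T : Finset (Finset α)} (hS : IsPolygonTriangulation a b S)
      (hT : IsPolygonTriangulation b c T) : IsPolygonTriangulation a c (insert {a, b, c} (S ∪ T))

lemma NonCrossing.exists_apex [LocallyFiniteOrder α] {T : Finset (Finset α)} {a c : α}
    (hT : NonCrossing T) (hcard : ∀ σ ∈ T, #σ = 3) (hsub : ∀ σ ∈ T, σ ⊆ Icc a c)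
    (hac : (Ioo a c).Nonempty) :
    ∃ b ∈ Ioo a c, ∀ σ ∈ T, σ ⊆ Icc a b ∨ σ ⊆ Icc b c ∨ σ = {a, b, c} := by
  -- `b` is the last vertex for which the chord `ab` is crossed by no triangle.
  let visible : Finset α := {x ∈ Ioo a c | ∀ σ ∈ T, ∀ u ∈ σ, ∀ w ∈ σ, ¬(a < u ∧ u < x ∧ x < w)}
  have hne : visible.Nonempty := by
    refine ⟨(Ioo a c).min' hac, mem_filter.2 ⟨min'_mem _ _, ?_⟩⟩
    rintro σ - u - w - ⟨hau, hux, -⟩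
    have huc := hux.trans (mem_Ioo.1 (min'_mem _ hac)).2
    exact (min'_le _ u (mem_Ioo.2 ⟨hau, huc⟩)).not_gt hux
  obtain ⟨b, hb, hmax⟩ := visible.exists_max_image id hne
  obtain ⟨hbI, hab⟩ := mem_filter.1 hb
  have hbounds : ∀ σ ∈ T, ∀ u ∈ σ, a ≤ u ∧ u ≤ c := fun σ hσ u hu ↦ mem_Icc.1 (hsub σ hσ hu)
  have hbc : ∀ σ ∈ T, ∀ u ∈ σ, ∀ w ∈ σ, ¬(u < b ∧ b < w ∧ w < c) := by
    rintro σ hσ u hu w hw ⟨hub, hbw, hwc⟩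
    obtain rfl | hau := (hbounds σ hσ u hu).1.eq_or_lt
    · have hw_visible : w ∈ visible := by
        refine mem_filter.2 ⟨mem_Ioo.2 ⟨hub.trans hbw, hwc⟩, fun τ hτ x hx y hy ↦ ?_⟩
        exact hT σ hσ τ hτ a hu w hw x hx y hy
      exact (hmax w hw_visible).not_gt hbw
    · exact hab σ hσ u hu w hw ⟨hau, hub, hbw⟩
  refine ⟨b, hbI, fun σ hσ ↦ ?_⟩
  by_cases hleft : ∀ w ∈ σ, w ≤ b
  · exact .inl fun w hw ↦ mem_Icc.2 ⟨(hbounds σ hσ w hw).1, hleft w hw⟩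
  by_cases hright : ∀ u ∈ σ, b ≤ u
  · exact .inr <| .inl fun u hu ↦ mem_Icc.2 ⟨hright u hu, (hbounds σ hσ u hu).2⟩
  push Not at hleft hright
  obtain ⟨w, hw, hbw⟩ := hleft
  obtain ⟨u, hu, hub⟩ := hright
  have hσabc : σ ⊆ {a, b, c} := by
    intro z hz
    have hzbounds := hbounds σ hσ z hz
    have hzw := hab σ hσ z hz w hw
    have huz := hbc σ hσ u hu z hz
    simp only [mem_insert, mem_singleton]
    grind
  exact .inr <| .inr <| eq_of_subset_of_card_le hσabc (card_le_three.trans (hcard σ hσ).ge)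

theorem NonCrossing.exists_isPolygonTriangulation_superset [LocallyFiniteOrder α]
    {T : Finset (Finset α)} {a c : α} (hac : a < c) (hT : NonCrossing T)
    (hcard : ∀ σ ∈ T, #σ = 3) (hsub : ∀ σ ∈ T, σ ⊆ Icc a c) :
    ∃ T', T ⊆ T' ∧ IsPolygonTriangulation a c T' := by
  induction hk : #(Icc a c) using Nat.strong_induction_on generalizing a c T with
  | _ k ih =>
  obtain hempty | hne := (Ioo a c).eq_empty_or_nonempty
  · have hcov : a ⋖ c := ⟨hac, fun x hax hxc ↦ by
      simpa only [hempty, notMem_empty] using mem_Ioo.2 ⟨hax, hxc⟩⟩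
    refine ⟨∅, fun σ hσ ↦ ?_, .edge hcov⟩
    have hσac : σ ⊆ {a, c} := (hsub σ hσ).trans_eq (by simp [← coe_inj, hcov.Icc_eq])
    have := (card_le_card hσac).trans card_le_two
    have := hcard σ hσ
    omega
  · obtain ⟨b, hb, hsplit⟩ := hT.exists_apex hcard hsub hne
    obtain ⟨hab, hbc⟩ := mem_Ioo.1 hb
    have extend : ∀ x y, x < y → Icc x y ⊂ Icc a c →
        ∃ S, {σ ∈ T | σ ⊆ Icc x y} ⊆ S ∧ IsPolygonTriangulation x y S := fun x y hxy hlt ↦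
      ih _ (hk ▸ card_lt_card hlt) hxy (hT.mono (filter_subset _ _))
        (fun σ hσ ↦ hcard σ (mem_filter.1 hσ).1) (fun σ hσ ↦ (mem_filter.1 hσ).2) rfl
    obtain ⟨S₁, hS₁, hP₁⟩ := extend a b hab (Icc_ssubset_Icc_right hac.le le_rfl hbc)
    obtain ⟨S₂, hS₂, hP₂⟩ := extend b c hbc (Icc_ssubset_Icc_left hac.le hab le_rfl)
    refine ⟨_, fun σ hσ ↦ ?_, hP₁.glue hP₂⟩
    rcases hsplit σ hσ with hσ' | hσ' | hσ'
    · exact mem_insert_of_mem (mem_union_left _ (hS₁ (mem_filter.2 ⟨hσ, hσ'⟩)))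
    · exact mem_insert_of_mem (mem_union_right _ (hS₂ (mem_filter.2 ⟨hσ, hσ'⟩)))
    · exact hσ' ▸ mem_insert_self _ _

namespace IsPolygonTriangulation

variable {a b c : α} {S T : Finset (Finset α)}

lemma lt (hT : IsPolygonTriangulation a c T) : a < c := by
  induction hT with
  | edge h => exact h.lt
  | glue _ _ hab hbc => exact hab.trans hbc

lemma exists_eq_triple (hT : IsPolygonTriangulation a c T) {σ : Finset α} (hσ : σ ∈ T) :
    ∃ x y z, a ≤ x ∧ x < y ∧ y < z ∧ z ≤ c ∧ σ = {x, y, z} := by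
  induction hT with
  | edge => exact absurd hσ (notMem_empty σ)
  | @glue a b c S T hS hT ihS ihT =>
    simp only [mem_insert, mem_union] at hσ
    obtain rfl | hσ | hσ := hσ
    · exact ⟨a, b, c, le_rfl, hS.lt, hT.lt, le_rfl, rfl⟩
    · obtain ⟨x, y, z, hx, hxy, hyz, hz, rfl⟩ := ihS hσ
      exact ⟨x, y, z, hx, hxy, hyz, hz.trans hT.lt.le, rfl⟩
    · obtain ⟨x, y, z, hx, hxy, hyz, hz, rfl⟩ := ihT hσ
      exact ⟨x, y, z, hS.lt.le.trans hx, hxy, hyz, hz, rfl⟩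

lemma card_eq_three (hT : IsPolygonTriangulation a c T) {σ : Finset α} (hσ : σ ∈ T) : #σ = 3 := by
  obtain ⟨x, y, z, -, hxy, hyz, -, rfl⟩ := hT.exists_eq_triple hσ
  exact Finset.card_eq_three.2 ⟨x, y, z, hxy.ne, (hxy.trans hyz).ne, hyz.ne, rfl⟩

lemma mem_bounds (hT : IsPolygonTriangulation a c T) {σ : Finset α} (hσ : σ ∈ T) {i : α}
    (hi : i ∈ σ) : a ≤ i ∧ i ≤ c := by
  obtain ⟨x, y, z, hax, hxy, hyz, hzc, rfl⟩ := hT.exists_eq_triple hσ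
  simp only [mem_insert, mem_singleton] at hi
  grind

lemma sum_glue {M : Type*} [AddCommMonoid M] (g : Finset α → M)
    (hS : IsPolygonTriangulation a b S) (hT : IsPolygonTriangulation b c T) :
    ∑ σ ∈ insert {a, b, c} (S ∪ T), g σ = g {a, b, c} + (∑ σ ∈ S, g σ + ∑ σ ∈ T, g σ) := by
  have hnotMem : {a, b, c} ∉ S ∪ T := by
    refine fun h ↦ (mem_union.1 h).elim (fun h ↦ ?_) fun h ↦ ?_
    · exact (hS.mem_bounds h (i := c) (by simp)).2.not_gt hT.lt
    · exact (hT.mem_bounds h (i := a) (by simp)).1.not_gt hS.lt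
  have hdisj : Disjoint S T := by
    refine Finset.disjoint_left.2 fun σ hσS hσT ↦ ?_
    obtain ⟨x, y, z, -, hxy, -, -, rfl⟩ := hS.exists_eq_triple hσS
    have hbx := (hT.mem_bounds hσT (i := x) (by simp)).1
    have hyb := (hS.mem_bounds hσS (i := y) (by simp)).2
    exact (hbx.trans_lt hxy).not_ge hyb
  rw [sum_insert hnotMem, sum_union hdisj]

end IsPolygonTriangulation

end PolygonTriangulation

section CumulativeWeight

open Finset

/-- The coordinate of index `i` of a GKZ vector, for a family `T` of sets `σ` with weights `A σ` in
place of areas. -/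
def gkzCoord {α : Type*} [DecidableEq α] (A : Finset α → ℝ) (T : Finset (Finset α)) (i : α) : ℝ :=
  ∑ σ ∈ T with i ∈ σ, A σ

/-- The sum of the GKZ coordinates of index at most `k`, written as a sum over `T`. -/
def cumWeight {α : Type*} [LinearOrder α] (A : Finset α → ℝ) (T : Finset (Finset α)) (k : α) : ℝ :=
  ∑ σ ∈ T, A σ * #{i ∈ σ | i ≤ k}

lemma GKZ_eq_sum_gkzCoord {m : ℕ} {E : Type*} [AddCommGroup E] [Module ℝ E] (v : Fin m → ℝ × ℝ)
    (f : Fin m → E) (T : Finset (Finset (Fin m))) :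
    GKZ v f T = ∑ i, gkzCoord (triArea v) T i • f i :=
  rfl

lemma sum_Iic_gkzCoord {α : Type*} [LinearOrder α] [LocallyFiniteOrderBot α]
    (A : Finset α → ℝ) (T : Finset (Finset α)) (k : α) :
    ∑ i ∈ Iic k, gkzCoord A T i = cumWeight A T k := by
  simp_rw [gkzCoord, cumWeight, sum_filter]
  rw [sum_comm]
  refine sum_congr rfl fun σ _ ↦ ?_
  have hfilter : {i ∈ Iic k | i ∈ σ} = {i ∈ σ | i ≤ k} := by
    ext i
    simp only [mem_filter, mem_Iic, and_comm]
  rw [← sum_filter, hfilter, sum_const, nsmul_eq_mul, mul_comm]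

lemma sum_const_add_sq {ι : Type*} (s : Finset ι) (x : ℝ) (g : ι → ℝ) :
    ∑ k ∈ s, (x + g k) ^ 2 = #s * x ^ 2 + 2 * x * ∑ k ∈ s, g k + ∑ k ∈ s, g k ^ 2 := by
  simp only [add_sq, sum_add_distrib, sum_const, nsmul_eq_mul, mul_sum]

lemma cast_eq_add_one_of_covBy {m : ℕ} {a c : Fin m} (h : a ⋖ c) : (c : ℝ) = a + 1 := by
  have hsucc : (c : ℕ) = a + 1 := (Nat.covBy_iff_add_one_eq.1 (Fin.covBy_iff.1 h)).symm
  rw [hsucc, Nat.cast_add_one]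

lemma cast_card_Ico {m : ℕ} {a c : Fin m} (h : a ≤ c) : (#(Ico a c) : ℝ) = c - a := by
  rw [Fin.card_Ico, Nat.cast_sub h]

lemma sum_univ_castSucc_eq_sum_Ico {m : ℕ} (g : Fin (m + 1) → ℝ) :
    ∑ k : Fin m, g k.castSucc = ∑ k ∈ Ico 0 (Fin.last m), g k := by
  have hIco : Ico 0 (Fin.last m) = univ.map Fin.castSuccEmb := by
    rw [← Fin.Iio_last_eq_map]
    exact Ico_bot
  rw [hIco, sum_map]
  rfl

/-- The sum of the squares of the partial GKZ sums of any triangulation of the polygon with vertices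
`0 < 1 < ⋯ < L`, if a triangle `{x, y, z}` has weight `(y - x) * (z - y) * (z - x)`. -/
noncomputable def cumWeightSqSum (L : ℝ) : ℝ :=
  (30 * L ^ 7 - 63 * L ^ 5 + 35 * L ^ 3 - 2 * L) / 105

lemma cumWeightSqSum_pos {L : ℝ} (hL : 2 ≤ L) : 0 < cumWeightSqSum L := by
  have hfactor : cumWeightSqSum L = L * (L ^ 2 - 1) * (30 * L ^ 4 - 33 * L ^ 2 + 2) / 105 := by
    rw [cumWeightSqSum]
    ring
  have hsq : 4 ≤ L ^ 2 := by nlinarith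
  have hquartic : 0 < 30 * L ^ 4 - 33 * L ^ 2 + 2 := by nlinarith
  rw [hfactor]
  exact div_pos (mul_pos (mul_pos (by linarith) (by linarith)) hquartic) (by norm_num)

/-- The weights that the areas of the triangles inscribed in an equally spaced parabola define, up
to a factor `C`. -/
def IsCubicWeight {m : ℕ} (C : ℝ) (A : Finset (Fin m) → ℝ) : Prop :=
  ∀ ⦃x y z : Fin m⦄, x < y → y < z →
    A {x, y, z} = C * (((y : ℝ) - x) * ((z : ℝ) - y) * ((z : ℝ) - x))

namespace IsPolygonTriangulation

section LinearOrder

variable {α : Type*} [LinearOrder α] {A : Finset α → ℝ} {a b c : α} {S T : Finset (Finset α)}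

lemma cumWeight_of_lt (hT : IsPolygonTriangulation a c T) {k : α} (hk : k < a) :
    cumWeight A T k = 0 := by
  refine sum_eq_zero fun σ hσ ↦ ?_
  rw [filter_false_of_mem fun i hi ↦ (hk.trans_le (hT.mem_bounds hσ hi).1).not_ge, card_empty,
    Nat.cast_zero, mul_zero]

lemma cumWeight_of_le (hT : IsPolygonTriangulation a c T) {k : α} (hk : c ≤ k) :
    cumWeight A T k = 3 * ∑ σ ∈ T, A σ := by
  rw [cumWeight, mul_sum]
  refine sum_congr rfl fun σ hσ ↦ ?_
  rw [filter_true_of_mem fun i hi ↦ (hT.mem_bounds hσ hi).2.trans hk, hT.card_eq_three hσ]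
  push_cast
  ring

lemma cumWeight_glue_left (hS : IsPolygonTriangulation a b S) (hT : IsPolygonTriangulation b c T)
    {k : α} (hak : a ≤ k) (hkb : k < b) :
    cumWeight A (insert {a, b, c} (S ∪ T)) k = A {a, b, c} + cumWeight A S k := by
  have hfilter : ({i ∈ {a, b, c} | i ≤ k} : Finset α) = {a} := by
    have := hT.lt
    grind
  rw [cumWeight, sum_glue _ hS hT, hfilter, card_singleton, Nat.cast_one, mul_one]
  change _ + (cumWeight A S k + cumWeight A T k) = _
  rw [hT.cumWeight_of_lt hkb, add_zero]

lemma cumWeight_glue_right (hS : IsPolygonTriangulation a b S) (hT : IsPolygonTriangulation b c T)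
    {k : α} (hbk : b ≤ k) (hkc : k < c) :
    cumWeight A (insert {a, b, c} (S ∪ T)) k
      = 2 * A {a, b, c} + 3 * ∑ σ ∈ S, A σ + cumWeight A T k := by
  have hfilter : ({i ∈ {a, b, c} | i ≤ k} : Finset α) = {a, b} := by
    have := hS.lt
    grind
  rw [cumWeight, sum_glue _ hS hT, hfilter, card_pair hS.lt.ne]
  change _ + (cumWeight A S k + cumWeight A T k) = _
  rw [hS.cumWeight_of_le hbk]
  push_cast
  ring

lemma sum_Ico_cumWeight_glue [LocallyFiniteOrder α] (φ : ℝ → ℝ)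
    (hS : IsPolygonTriangulation a b S) (hT : IsPolygonTriangulation b c T) :
    ∑ k ∈ Ico a c, φ (cumWeight A (insert {a, b, c} (S ∪ T)) k)
      = ∑ k ∈ Ico a b, φ (A {a, b, c} + cumWeight A S k)
        + ∑ k ∈ Ico b c, φ (2 * A {a, b, c} + 3 * ∑ σ ∈ S, A σ + cumWeight A T k) := by
  rw [← Ico_union_Ico_eq_Ico hS.lt.le hT.lt.le, sum_union (Ico_disjoint_Ico_consecutive a b c)]
  congr 1 <;> refine sum_congr rfl fun k hk ↦ ?_
  · rw [cumWeight_glue_left hS hT (mem_Ico.1 hk).1 (mem_Ico.1 hk).2]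
  · rw [cumWeight_glue_right hS hT (mem_Ico.1 hk).1 (mem_Ico.1 hk).2]

end LinearOrder

variable {m : ℕ} {C : ℝ} {A : Finset (Fin m) → ℝ} {a c : Fin m} {T : Finset (Finset (Fin m))}

theorem three_mul_sum_weight (hA : IsCubicWeight C A) (hT : IsPolygonTriangulation a c T) :
    3 * ∑ σ ∈ T, A σ = C * (((c : ℝ) - a) ^ 3 - (c - a)) := by
  induction hT with
  | edge h =>
    rw [sum_empty, cast_eq_add_one_of_covBy h]
    ring
  | glue hS hT ihS ihT =>
    rw [sum_glue _ hS hT, hA hS.lt hT.lt]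
    linear_combination ihS + ihT

theorem sum_cumWeight (hA : IsCubicWeight C A) (hT : IsPolygonTriangulation a c T) :
    ∑ k ∈ Ico a c, cumWeight A T k = C * (((c : ℝ) - a) ^ 4 - (c - a) ^ 2) / 2 := by
  induction hT with
  | edge h =>
    simp only [cumWeight, sum_empty, sum_const_zero, cast_eq_add_one_of_covBy h]
    ring
  | glue hS hT ihS ihT =>
    rw [sum_Ico_cumWeight_glue (fun x ↦ x) hS hT]
    simp only [sum_add_distrib, sum_const, nsmul_eq_mul, cast_card_Ico hS.lt.le,
      cast_card_Ico hT.lt.le, hS.three_mul_sum_weight hA, ihS, ihT, hA hS.lt hT.lt]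
    ring

theorem sum_cumWeight_sq (hA : IsCubicWeight C A) (hT : IsPolygonTriangulation a c T) :
    ∑ k ∈ Ico a c, cumWeight A T k ^ 2
      = C ^ 2 * cumWeightSqSum (c - a) := by
  simp only [cumWeightSqSum]
  induction hT with
  | edge h =>
    simp only [cumWeight, sum_empty, zero_pow two_ne_zero, sum_const_zero,
      cast_eq_add_one_of_covBy h]
    ring
  | glue hS hT ihS ihT =>
    rw [sum_Ico_cumWeight_glue (fun x ↦ x ^ 2) hS hT]
    simp only [sum_const_add_sq, cast_card_Ico hS.lt.le, cast_card_Ico hT.lt.le,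
      hS.three_mul_sum_weight hA, hS.sum_cumWeight hA, hT.sum_cumWeight hA, ihS, ihT,
      hA hS.lt hT.lt]
    ring

section Fin

variable {m : ℕ} {C : ℝ} {A : Finset (Fin (m + 1)) → ℝ} {T : Finset (Finset (Fin (m + 1)))}

theorem sum_gkzCoord (hA : IsCubicWeight C A) (hT : IsPolygonTriangulation 0 (Fin.last m) T) :
    ∑ i, gkzCoord A T i = C * ((m : ℝ) ^ 3 - m) := by
  have huniv : (univ : Finset (Fin (m + 1))) = Iic (Fin.last m) := Iic_top.symm
  rw [huniv, sum_Iic_gkzCoord, hT.cumWeight_of_le le_rfl, hT.three_mul_sum_weight hA]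
  simp

theorem sum_cumWeight_castSucc_sq (hA : IsCubicWeight C A)
    (hT : IsPolygonTriangulation 0 (Fin.last m) T) :
    ∑ k : Fin m, cumWeight A T k.castSucc ^ 2 = C ^ 2 * cumWeightSqSum m := by
  rw [sum_univ_castSucc_eq_sum_Ico fun k ↦ cumWeight A T k ^ 2, hT.sum_cumWeight_sq hA]
  simp

end Fin

end IsPolygonTriangulation

end CumulativeWeight

section PlaneMeasure

variable {E : Type*} [NormedAddCommGroup E] [NormedSpace ℝ E] [MeasurableSpace E] [BorelSpace E]
  [FiniteDimensional ℝ E] (μ : Measure E) [μ.IsAddHaarMeasure]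

lemma measureReal_image_affineMap (Φ : E →ᵃ[ℝ] E) (s : Set E) :
    μ.real (Φ '' s) = |LinearMap.det Φ.linear| * μ.real s := by
  have himage : Φ '' s = (· + Φ 0) '' (Φ.linear '' s) := by
    rw [Set.image_image]
    exact Set.image_congr fun x _ ↦ congrFun Φ.decomp x
  rw [measureReal_def, himage, Set.image_add_right, measure_preimage_add_right,
    Measure.addHaar_image_linearMap, ENNReal.toReal_mul, ENNReal.toReal_ofReal (abs_nonneg _),
    measureReal_def]

lemma measure_affineMap_eq_zero (ℓ : E →ᵃ[ℝ] ℝ) {x : E} (hx : ℓ x ≠ 0) : μ {y | ℓ y = 0} = 0 := by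
  let H : AffineSubspace ℝ E := (AffineSubspace.mk' 0 ⊥).comap ℓ
  have hcoe : {y | ℓ y = 0} = (H : Set E) := by
    ext y
    simp [H]
  rw [hcoe]
  refine Measure.addHaar_affineSubspace μ H fun htop ↦ hx ?_
  exact hcoe.ge (htop ▸ AffineSubspace.mem_top ℝ E x)

lemma measureReal_convexHull_add_le {S U V : Set E} (hV : V.Finite) (hSV : S ⊆ V) (hUV : U ⊆ V)
    (ℓ : E →ᵃ[ℝ] ℝ) {x : E} (hx : ℓ x ≠ 0) (hS : ∀ y ∈ S, ℓ y ≤ 0) (hU : ∀ y ∈ U, 0 ≤ ℓ y) :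
    μ.real (convexHull ℝ S) + μ.real (convexHull ℝ U) ≤ μ.real (convexHull ℝ V) := by
  have hle : convexHull ℝ S ⊆ {y | ℓ y ≤ 0} := convexHull_min hS ((convex_Iic 0).affine_preimage ℓ)
  have hge : convexHull ℝ U ⊆ {y | 0 ≤ ℓ y} := convexHull_min hU ((convex_Ici 0).affine_preimage ℓ)
  have hdisj : AEDisjoint μ (convexHull ℝ S) (convexHull ℝ U) :=
    measure_mono_null (fun y hy ↦ (hle hy.1).antisymm (hge hy.2)) (measure_affineMap_eq_zero μ ℓ hx)
  have hfinite {W : Set E} (hWV : W ⊆ V) : μ (convexHull ℝ W) ≠ ⊤ :=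
    ((hV.subset hWV).isCompact_convexHull ℝ).measure_lt_top.ne
  have hmeas : MeasurableSet (convexHull ℝ U) :=
    ((hV.subset hUV).isCompact_convexHull ℝ).measurableSet
  rw [← measureReal_union₀ hmeas.nullMeasurableSet hdisj (hfinite hSV) (hfinite hUV)]
  exact measureReal_mono (Set.union_subset (convexHull_mono hSV) (convexHull_mono hUV))
    (hfinite subset_rfl)

/-- The affine self-map of the plane that carries the origin to `o` and the standard basis vectors
to `u` and `w`. -/
noncomputable def planeAffineMap (o u w : ℝ × ℝ) : (ℝ × ℝ) →ᵃ[ℝ] (ℝ × ℝ) :=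
  (Matrix.toLin (Module.Basis.finTwoProd ℝ) (Module.Basis.finTwoProd ℝ)
    !![u.1, w.1; u.2, w.2]).toAffineMap + AffineMap.const ℝ (ℝ × ℝ) o

lemma planeAffineMap_apply (o u w x : ℝ × ℝ) :
    planeAffineMap o u w x
      = (u.1 * x.1 + w.1 * x.2 + o.1, u.2 * x.1 + w.2 * x.2 + o.2) := by
  simp only [planeAffineMap, AffineMap.coe_add, Pi.add_apply, LinearMap.coe_toAffineMap,
    Matrix.toLin_finTwoProd_apply, AffineMap.const_apply]
  rfl

lemma det_linear_planeAffineMap (o u w : ℝ × ℝ) :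
    LinearMap.det (planeAffineMap o u w).linear = u.1 * w.2 - w.1 * u.2 := by
  simp [planeAffineMap, Matrix.det_fin_two_of]

lemma convexHull_unit_triangle :
    convexHull ℝ {((0 : ℝ), (0 : ℝ)), (1, 0), (0, 1)}
      = {x | 0 ≤ x.1 ∧ x.2 ∈ Set.Icc 0 (1 - x.1)} := by
  refine (convexHull_min ?_ ?_).antisymm fun x hx ↦ ?_
  · rintro x (rfl | rfl | rfl) <;> norm_num
  · rintro x ⟨hx, hx', hx''⟩ y ⟨hy, hy', hy''⟩ s t hs ht hst
    simp only [Set.mem_ofPred_eq, Set.mem_Icc, Prod.fst_add, Prod.snd_add, Prod.smul_fst,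
      Prod.smul_snd, smul_eq_mul]
    refine ⟨by positivity, by positivity, ?_⟩
    nlinarith
  · obtain ⟨hx₁, hx₂, hx₁₂⟩ := hx
    refine mem_convexHull_of_exists_fintype ![1 - x.1 - x.2, x.1, x.2] ![(0, 0), (1, 0), (0, 1)]
      ?_ ?_ ?_ ?_
    · simpa [Fin.forall_fin_succ, hx₁, hx₂] using hx₁₂
    · simp only [Fin.sum_univ_three, Matrix.cons_val]
      ring
    · simp [Fin.forall_fin_succ]
    · simp [Fin.sum_univ_three]

lemma volume_convexHull_unit_triangle :
    volume.real (convexHull ℝ {((0 : ℝ), (0 : ℝ)), (1, 0), (0, 1)}) = 1 / 2 := by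
  have hmeas : MeasurableSet (convexHull ℝ {((0 : ℝ), (0 : ℝ)), (1, 0), (0, 1)}) :=
    (Set.Finite.isCompact_convexHull ℝ (Set.toFinite _)).measurableSet
  have hslice (x : ℝ) :
      volume (Prod.mk x ⁻¹' convexHull ℝ {((0 : ℝ), (0 : ℝ)), (1, 0), (0, 1)})
        = (Set.Icc 0 1).indicator (fun x ↦ ENNReal.ofReal (1 - x)) x := by
    rw [convexHull_unit_triangle]
    by_cases hx : 0 ≤ x
    · have hpre : Prod.mk x ⁻¹' {x : ℝ × ℝ | 0 ≤ x.1 ∧ x.2 ∈ Set.Icc 0 (1 - x.1)}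
          = Set.Icc 0 (1 - x) := by
        ext y
        simp [hx]
      rw [hpre, Real.volume_Icc, sub_zero]
      by_cases hx' : x ≤ 1
      · simp [hx, hx']
      · simp [hx', (not_le.1 hx').le]
    · simp [hx]
  have hnonneg : 0 ≤ᵐ[volume.restrict (Set.Icc (0 : ℝ) 1)] fun x ↦ 1 - x :=
    (ae_restrict_mem measurableSet_Icc).mono fun x hx ↦ sub_nonneg.2 hx.2
  have hint : IntegrableOn (fun x : ℝ ↦ 1 - x) (Set.Icc 0 1) :=
    (continuous_const.sub continuous_id).integrableOn_Icc
  rw [measureReal_def, Measure.volume_eq_prod, Measure.prod_apply hmeas]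
  simp_rw [hslice]
  rw [lintegral_indicator measurableSet_Icc, ← ofReal_integral_eq_lintegral_ofReal hint hnonneg,
    ENNReal.toReal_ofReal (integral_nonneg_of_ae hnonneg), integral_Icc_eq_integral_Ioc,
    ← intervalIntegral.integral_of_le zero_le_one,
    intervalIntegral.integral_sub intervalIntegrable_const intervalIntegral.intervalIntegrable_id,
    integral_id]
  norm_num

theorem volume_convexHull_triple (A B C : ℝ × ℝ) :
    volume.real (convexHull ℝ {A, B, C})
      = |(B.1 - A.1) * (C.2 - A.2) - (C.1 - A.1) * (B.2 - A.2)| / 2 := by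
  have himage : planeAffineMap A (B - A) (C - A) '' convexHull ℝ {(0, 0), (1, 0), (0, 1)}
      = convexHull ℝ {A, B, C} := by
    rw [AffineMap.image_convexHull]
    simp [Set.image_insert_eq, planeAffineMap_apply]
  rw [← himage, measureReal_image_affineMap, det_linear_planeAffineMap,
    volume_convexHull_unit_triangle, mul_one_div]
  rfl

end PlaneMeasure

section Triangulation

variable {m : ℕ} {v : Fin m → ℝ × ℝ} {T : Finset (Finset (Fin m))}

lemma triArea_comp (Φ : (ℝ × ℝ) →ᵃ[ℝ] (ℝ × ℝ)) (σ : Finset (Fin m)) :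
    triArea (Φ ∘ v) σ = |LinearMap.det Φ.linear| * triArea v σ := by
  rw [triArea, Set.image_comp, ← AffineMap.image_convexHull]
  exact measureReal_image_affineMap volume Φ _

lemma isExtreme_of_image_affineMap {E F : Type*} [AddCommGroup E] [Module ℝ E] [AddCommGroup F]
    [Module ℝ F] {Φ : E →ᵃ[ℝ] F} (hΦ : Function.Injective Φ) {A B : Set E}
    (h : IsExtreme ℝ (Φ '' A) (Φ '' B)) : IsExtreme ℝ A B where
  subset := (Set.image_subset_image_iff hΦ).1 h.subset
  left_mem_of_mem_openSegment x hx y hy z hz hzxy := by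
    refine hΦ.mem_set_image.1 (h.left_mem_of_mem_openSegment (Set.mem_image_of_mem Φ hx)
      (Set.mem_image_of_mem Φ hy) (Set.mem_image_of_mem Φ hz) ?_)
    rw [← image_openSegment]
    exact Set.mem_image_of_mem Φ hzxy

lemma IsTriangulation.of_comp {Φ : (ℝ × ℝ) →ᵃ[ℝ] (ℝ × ℝ)} (hΦ : Function.Injective Φ)
    (hT : IsTriangulation (Φ ∘ v) T) : IsTriangulation v T := by
  obtain ⟨htriple, hcover, hface⟩ := hT
  simp only [Set.image_comp, Set.range_comp, ← AffineMap.image_convexHull, ← Set.image_iUnion,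
    ← Set.image_inter hΦ] at hcover hface
  exact ⟨fun σ hσ ↦ ⟨(htriple σ hσ).1, (htriple σ hσ).2.of_comp Φ⟩, hΦ.image_injective hcover,
    fun σ hσ τ hτ ↦ ⟨isExtreme_of_image_affineMap hΦ (hface σ hσ τ hτ).1,
      isExtreme_of_image_affineMap hΦ (hface σ hσ τ hτ).2⟩⟩

lemma IsTriangulation.triArea_univ_le (hT : IsTriangulation v T) :
    triArea v Finset.univ ≤ ∑ σ ∈ T, triArea v σ := by
  have hcover : convexHull ℝ (v '' ↑(Finset.univ : Finset (Fin m)))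
      = ⋃ σ ∈ T, convexHull ℝ (v '' ↑σ) := by
    rw [Finset.coe_univ, Set.image_univ, hT.2.1]
  rw [triArea, hcover]
  exact measureReal_biUnion_finset_le T _

end Triangulation

section Parabola

open Finset

/-- The standard parametrization of the parabola `y = x²`. -/
def parabola (r : ℝ) : ℝ × ℝ := (r, r ^ 2)

/-- The affine functional that vanishes on the chord of the parabola from `s` to `s'`, or on the
tangent at `s` when `s = s'`, and is positive above it. -/
noncomputable def chordFunctional (s s' : ℝ) : (ℝ × ℝ) →ᵃ[ℝ] ℝ :=
  (LinearMap.snd ℝ ℝ ℝ - (s + s') • LinearMap.fst ℝ ℝ ℝ).toAffineMap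
    + AffineMap.const ℝ (ℝ × ℝ) (s * s')

lemma chordFunctional_parabola (s s' r : ℝ) :
    chordFunctional s s' (parabola r) = (r - s) * (r - s') := by
  simp only [chordFunctional, parabola, AffineMap.coe_add, Pi.add_apply, LinearMap.coe_toAffineMap,
    LinearMap.sub_apply, LinearMap.smul_apply, LinearMap.snd_apply, LinearMap.fst_apply,
    AffineMap.const_apply, smul_eq_mul]
  ring

lemma parabola_mem_convexHull_iff {r : ℝ} {S : Set ℝ} :
    parabola r ∈ convexHull ℝ (parabola '' S) ↔ r ∈ S := by
  refine ⟨fun h ↦ ?_, fun h ↦ subset_convexHull ℝ _ (Set.mem_image_of_mem _ h)⟩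
  by_contra hr
  have habove : convexHull ℝ (parabola '' S) ⊆ chordFunctional r r ⁻¹' Set.Ioi 0 := by
    refine convexHull_min ?_ ((convex_Ioi 0).affine_preimage _)
    rintro _ ⟨s, hs, rfl⟩
    rw [Set.mem_preimage, chordFunctional_parabola]
    exact mul_self_pos.2 (sub_ne_zero.2 fun hsr : s = r ↦ hr (hsr ▸ hs))
  have hpos := habove h
  rw [Set.mem_preimage, chordFunctional_parabola, sub_self, mul_zero] at hpos
  exact lt_irrefl (0 : ℝ) hpos

lemma exists_mem_openSegment_parabola {x u y w : ℝ} (hxu : x < u) (huy : u < y) (hyw : y < w) :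
    ∃ P, P ∈ openSegment ℝ (parabola x) (parabola y) ∧
      P ∈ openSegment ℝ (parabola u) (parabola w) := by
  have : 0 < u - x := sub_pos.2 hxu
  have : 0 < y - u := sub_pos.2 huy
  have : 0 < w - y := sub_pos.2 hyw
  have hyx : 0 < y - x := sub_pos.2 (hxu.trans huy)
  have hwu : 0 < w - u := sub_pos.2 (huy.trans hyw)
  have hwx : 0 < w - x := sub_pos.2 (hxu.trans (huy.trans hyw))
  have hD : 0 < u + w - x - y := by linarith
  refine ⟨((y - u) * (w - y) / ((u + w - x - y) * (y - x))) • parabola x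
    + ((u - x) * (w - x) / ((u + w - x - y) * (y - x))) • parabola y,
    ⟨_, _, by positivity, by positivity, by field_simp; ring, rfl⟩,
    (w - x) * (w - y) / ((u + w - x - y) * (w - u)),
    (u - x) * (y - u) / ((u + w - x - y) * (w - u)),
    by positivity, by positivity, by field_simp; ring, ?_⟩
  ext <;> simp only [parabola, Prod.smul_mk, Prod.mk_add_mk, smul_eq_mul] <;> field_simp <;> ring

variable {m : ℕ} {t : Fin m → ℝ}

lemma triArea_parabola_triple (ht : Monotone t) {x y z : Fin m} (hxy : x ≤ y) (hyz : y ≤ z) :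
    triArea (parabola ∘ t) {x, y, z} = (t y - t x) * (t z - t y) * (t z - t x) / 2 := by
  have hxy' := sub_nonneg.2 (ht hxy)
  have hyz' := sub_nonneg.2 (ht hyz)
  have hxz' := sub_nonneg.2 (ht (hxy.trans hyz))
  have himage : (parabola ∘ t) '' ↑({x, y, z} : Finset (Fin m))
      = {parabola (t x), parabola (t y), parabola (t z)} := by
    simp [Set.image_insert_eq]
  rw [triArea, himage, ← measureReal_def, volume_convexHull_triple,
    ← abs_of_nonneg (mul_nonneg (mul_nonneg hxy' hyz') hxz')]
  simp only [parabola]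
  ring_nf

lemma triArea_add_le_of_chord {S U V : Finset (Fin m)} (hSV : S ⊆ V) (hUV : U ⊆ V) (s s' : ℝ)
    (hS : ∀ i ∈ S, (t i - s) * (t i - s') ≤ 0) (hU : ∀ i ∈ U, 0 ≤ (t i - s) * (t i - s')) :
    triArea (parabola ∘ t) S + triArea (parabola ∘ t) U ≤ triArea (parabola ∘ t) V := by
  have hne : chordFunctional s s' (parabola (max s s' + 1)) ≠ 0 := by
    rw [chordFunctional_parabola]
    have := le_max_left s s'
    have := le_max_right s s'
    exact mul_ne_zero (by linarith) (by linarith)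
  refine measureReal_convexHull_add_le volume ((V.finite_toSet).image _) (Set.image_mono hSV)
    (Set.image_mono hUV) (chordFunctional s s') hne ?_ ?_
  · rintro _ ⟨i, hi, rfl⟩
    exact (chordFunctional_parabola s s' (t i)).trans_le (hS i hi)
  · rintro _ ⟨i, hi, rfl⟩
    exact (hU i hi).trans_eq (chordFunctional_parabola s s' (t i)).symm

lemma IsPolygonTriangulation.sum_triArea_le (ht : Monotone t) {a c : Fin m}
    {T : Finset (Finset (Fin m))} (hT : IsPolygonTriangulation a c T) :
    ∑ σ ∈ T, triArea (parabola ∘ t) σ ≤ triArea (parabola ∘ t) (Icc a c) := by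
  induction hT with
  | edge _ => exact sum_empty.trans_le ENNReal.toReal_nonneg
  | @glue a b c S T hS hT ihS ihT =>
    have hab := hS.lt.le
    have hbc := hT.lt.le
    have between : ∀ x y, ∀ i ∈ Icc x y, (t i - t x) * (t i - t y) ≤ 0 := fun x y i hi ↦
      mul_nonpos_of_nonneg_of_nonpos (sub_nonneg.2 (ht (mem_Icc.1 hi).1))
        (sub_nonpos.2 (ht (mem_Icc.1 hi).2))
    have hsplit_bc : triArea (parabola ∘ t) (Icc b c) + triArea (parabola ∘ t) {a, b, c}
        ≤ triArea (parabola ∘ t) (insert a (Icc b c)) := by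
      refine triArea_add_le_of_chord (subset_insert _ _) ?_ (t b) (t c) (between b c) ?_
      · simp [insert_subset_iff, hbc]
      · simp only [mem_insert, mem_singleton, forall_eq_or_imp, forall_eq, sub_self, zero_mul,
          mul_zero, le_refl, and_true]
        exact mul_nonneg_of_nonpos_of_nonpos (sub_nonpos.2 (ht hab))
          (sub_nonpos.2 (ht (hab.trans hbc)))
    have hsplit_ab : triArea (parabola ∘ t) (Icc a b)
        + triArea (parabola ∘ t) (insert a (Icc b c)) ≤ triArea (parabola ∘ t) (Icc a c) := by
      refine triArea_add_le_of_chord (Icc_subset_Icc_right hbc) ?_ (t a) (t b) (between a b) ?_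
      · exact insert_subset (left_mem_Icc.2 (hab.trans hbc)) (Icc_subset_Icc_left hab)
      · simp only [mem_insert, mem_Icc, forall_eq_or_imp, sub_self, zero_mul, le_refl, true_and]
        exact fun i hi ↦ mul_nonneg (sub_nonneg.2 (ht (hab.trans hi.1))) (sub_nonneg.2 (ht hi.1))
    rw [IsPolygonTriangulation.sum_glue _ hS hT]
    linarith

namespace IsTriangulation

variable {T : Finset (Finset (Fin m))}

lemma nonCrossing (ht : StrictMono t) (hT : IsTriangulation (parabola ∘ t) T) : NonCrossing T := by
  rintro σ hσ τ hτ x hx y hy u hu w hw ⟨hxu, huy, hyw⟩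
  have hvertex {i : Fin m} {ρ : Finset (Fin m)} :
      (parabola ∘ t) i ∈ convexHull ℝ ((parabola ∘ t) '' ρ) ↔ i ∈ ρ := by
    rw [Set.image_comp, Function.comp_apply, parabola_mem_convexHull_iff,
      ht.injective.mem_set_image, mem_coe]
  obtain ⟨P, hPxy, hPuw⟩ := exists_mem_openSegment_parabola (ht hxu) (ht huy) (ht hyw)
  have hP : P ∈ convexHull ℝ ((parabola ∘ t) '' σ) ∩ convexHull ℝ ((parabola ∘ t) '' τ) :=
    ⟨(convex_convexHull ℝ _).openSegment_subset (hvertex.2 hx) (hvertex.2 hy) hPxy,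
      (convex_convexHull ℝ _).openSegment_subset (hvertex.2 hu) (hvertex.2 hw) hPuw⟩
  have hface_τ := (hT.2.2 σ hσ τ hτ).2
  have huσ : u ∈ σ := hvertex.1
    (hface_τ.left_mem_of_mem_openSegment (hvertex.2 hu) (hvertex.2 hw) hP hPuw).1
  have hwσ : w ∈ σ := hvertex.1
    (hface_τ.right_mem_of_mem_openSegment (hvertex.2 hu) (hvertex.2 hw) hP hPuw).1
  have hsub : {x, u, y, w} ⊆ σ := by
    simp [insert_subset_iff, hx, huσ, hy, hwσ]
  have hcard : #{x, u, y, w} = 4 := by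
    have := hxu.trans huy
    have := huy.trans hyw
    have := hxu.trans this
    grind
  have := card_le_card hsub
  have := (hT.1 σ hσ).1
  omega

theorem isPolygonTriangulation {t : Fin (m + 2) → ℝ} {T : Finset (Finset (Fin (m + 2)))}
    (ht : StrictMono t) (hT : IsTriangulation (parabola ∘ t) T) :
    IsPolygonTriangulation 0 (Fin.last (m + 1)) T := by
  obtain ⟨T', hTT', hT'⟩ := (hT.nonCrossing ht).exists_isPolygonTriangulation_superset
    (Fin.last_pos' (n := m + 1)) (fun σ hσ ↦ (hT.1 σ hσ).1)
    (fun σ _ i _ ↦ mem_Icc.2 ⟨Fin.zero_le i, Fin.le_last i⟩)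
  have hpos : ∀ σ ∈ T', 0 < triArea (parabola ∘ t) σ := by
    intro σ hσ
    obtain ⟨x, y, z, -, hxy, hyz, -, rfl⟩ := hT'.exists_eq_triple hσ
    rw [triArea_parabola_triple ht.monotone hxy.le hyz.le]
    have hxy' := sub_pos.2 (ht hxy)
    have hyz' := sub_pos.2 (ht hyz)
    have hxz' := sub_pos.2 (ht (hxy.trans hyz))
    positivity
  have harea : ∑ σ ∈ T', triArea (parabola ∘ t) σ ≤ ∑ σ ∈ T, triArea (parabola ∘ t) σ :=
    calc ∑ σ ∈ T', triArea (parabola ∘ t) σ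
      _ ≤ triArea (parabola ∘ t) (Icc 0 (Fin.last (m + 1))) := hT'.sum_triArea_le ht.monotone
      _ = triArea (parabola ∘ t) univ := congrArg _ (Icc_bot_top (α := Fin (m + 2)))
      _ ≤ ∑ σ ∈ T, triArea (parabola ∘ t) σ := hT.triArea_univ_le
  have hsub : T' ⊆ T := by
    intro σ hσ
    by_contra hσT
    exact (sum_lt_sum_of_subset hTT' hσ hσT (hpos σ hσ) fun τ hτ _ ↦ (hpos τ hτ).le).not_ge harea
  exact hTT'.antisymm hsub ▸ hT'

end IsTriangulation

end Parabola

section EllipsoidMap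

open Finset

/-- The summation operator `x ↦ (k ↦ ∑ i ≤ k, x i)`, as a linear automorphism. -/
noncomputable def partialSumEquiv (ι : Type*) [Fintype ι] [PartialOrder ι]
    [LocallyFiniteOrderBot ι] : (ι → ℝ) ≃ₗ[ℝ] (ι → ℝ) :=
  LinearEquiv.ofInjectiveEndo
    { toFun x k := ∑ i ∈ Iic k, x i
      map_add' _ _ := funext fun _ ↦ sum_add_distrib
      map_smul' _ _ := funext fun _ ↦ (mul_sum _ _ _).symm } <| by
    refine (injective_iff_map_eq_zero _).2 fun x hx ↦ funext fun k ↦ ?_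
    induction k using WellFoundedLT.induction with
    | ind k ih =>
      have hsum : ∑ i ∈ Iic k, x i = x k :=
        sum_eq_single_of_mem k (mem_Iic.2 le_rfl) fun i hi hik ↦ ih i ((mem_Iic.1 hi).lt_of_ne hik)
      exact hsum.symm.trans (congrFun hx k)

lemma partialSumEquiv_apply {ι : Type*} [Fintype ι] [PartialOrder ι] [LocallyFiniteOrderBot ι]
    (x : ι → ℝ) (k : ι) : partialSumEquiv ι x k = ∑ i ∈ Iic k, x i :=
  rfl

theorem exists_affineEquiv_partialSum {m : ℕ} {E : Type*} [AddCommGroup E] [Module ℝ E]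
    [FiniteDimensional ℝ E] (hE : Module.finrank ℝ E = m) {f : Fin (m + 1) → E}
    (hf : AffineIndependent ℝ f) (Z : ℝ) :
    ∃ M : E ≃ᵃ[ℝ] EuclideanSpace ℝ (Fin m), ∀ z : Fin (m + 1) → ℝ, ∑ i, z i = Z →
      ∀ k, M (∑ i, z i • f i) k = ∑ i ∈ Iic k.castSucc, z i := by
  have hlin : LinearIndependent ℝ fun i : Fin m ↦ f i.castSucc - f (Fin.last m) :=
    ((affineIndependent_iff_linearIndependent_vsub ℝ f (Fin.last m)).1 hf).comp
      (fun i : Fin m ↦ (⟨i.castSucc, i.castSucc_ne_last⟩ : {j // j ≠ Fin.last m}))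
      fun _ _ hij ↦ Fin.castSucc_injective m (congrArg Subtype.val hij)
  let B : Module.Basis (Fin m) ℝ E :=
    basisOfLinearIndependentOfCardEqFinrank' _ hlin (by rw [Fintype.card_fin, hE])
  have hB (i : Fin m) : B i = f i.castSucc - f (Fin.last m) := by simp [B]
  let e : E ≃ₗ[ℝ] EuclideanSpace ℝ (Fin m) :=
    B.equivFun ≪≫ₗ partialSumEquiv (Fin m) ≪≫ₗ (WithLp.linearEquiv 2 ℝ (Fin m → ℝ)).symm
  refine ⟨(AffineEquiv.constVAdd ℝ E (-(Z • f (Fin.last m)))).trans e.toAffineEquiv,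
    fun z hz k ↦ ?_⟩
  have hcoord : -(Z • f (Fin.last m)) + ∑ i, z i • f i
      = B.equivFun.symm fun i ↦ z i.castSucc := by
    simp only [← hz, Fin.sum_univ_castSucc, B.equivFun_symm_apply, hB, smul_sub, sum_sub_distrib,
      add_smul, sum_smul]
    abel
  calc e (-(Z • f (Fin.last m)) + ∑ i, z i • f i) k
    _ = ∑ i ∈ Iic k, z i.castSucc := by
      rw [hcoord]
      simp only [e, LinearEquiv.trans_apply, LinearEquiv.apply_symm_apply]
      exact partialSumEquiv_apply _ k
    _ = ∑ i ∈ Iic k.castSucc, z i := by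
      rw [← Fin.map_castSuccEmb_Iic, sum_map]
      rfl

end EllipsoidMap

section QuadraticCurve

open Polynomial

lemma eval_of_degree_le_two {R : Type*} [CommSemiring R] {p : R[X]} (hp : p.degree ≤ 2) (x : R) :
    p.eval x = p.coeff 2 * x ^ 2 + p.coeff 1 * x + p.coeff 0 := by
  conv_lhs => rw [eq_quadratic_of_degree_le_two hp]
  simp

lemma coeff_det_ne_zero_of_linearIndependent {p q : ℝ[X]} (hp : p.degree ≤ 2)
    (hq : q.degree ≤ 2) (hind : LinearIndependent ℝ ![p, q, 1]) :
    p.coeff 1 * q.coeff 2 - p.coeff 2 * q.coeff 1 ≠ 0 := by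
  intro hdet
  obtain ⟨x, hx, hxM⟩ := Matrix.exists_vecMul_eq_zero_iff.2
    ((Matrix.det_fin_two_of (p.coeff 1) (p.coeff 2) (q.coeff 1) (q.coeff 2)).trans hdet)
  have hx₁ : x 0 * p.coeff 1 + x 1 * q.coeff 1 = 0 := by
    simpa [Matrix.vecMul, dotProduct] using congrFun hxM 0
  have hx₂ : x 0 * p.coeff 2 + x 1 * q.coeff 2 = 0 := by
    simpa [Matrix.vecMul, dotProduct] using congrFun hxM 1
  have hrel : x 0 • p + x 1 • q + -(x 0 * p.coeff 0 + x 1 * q.coeff 0) • (1 : ℝ[X]) = 0 := by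
    refine Polynomial.funext fun t ↦ ?_
    simp only [eval_add, eval_smul, eval_of_degree_le_two hp, eval_of_degree_le_two hq, eval_one,
      smul_eq_mul, eval_zero]
    linear_combination t * hx₁ + t ^ 2 * hx₂
  have hcoeff := Fintype.linearIndependent_iff.1 hind
    ![x 0, x 1, -(x 0 * p.coeff 0 + x 1 * q.coeff 0)] (by simpa [Fin.sum_univ_three] using hrel)
  refine hx (funext fun i ↦ ?_)
  fin_cases i
  exacts [hcoeff 0, hcoeff 1]

lemma exists_affineMap_parabola {p q : ℝ[X]} (hp : p.degree ≤ 2) (hq : q.degree ≤ 2)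
    (hind : LinearIndependent ℝ ![p, q, 1]) (a : ℝ) {b : ℝ} (hb : b ≠ 0) :
    ∃ Φ : (ℝ × ℝ) →ᵃ[ℝ] (ℝ × ℝ), LinearMap.det Φ.linear ≠ 0 ∧
      ∀ r, (p.eval (a + r * b), q.eval (a + r * b)) = Φ (parabola r) := by
  refine ⟨planeAffineMap (p.eval a, q.eval a)
    (b * (p.coeff 1 + 2 * p.coeff 2 * a), b * (q.coeff 1 + 2 * q.coeff 2 * a))
    (b ^ 2 * p.coeff 2, b ^ 2 * q.coeff 2), ?_, fun r ↦ ?_⟩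
  · rw [det_linear_planeAffineMap]
    convert mul_ne_zero (pow_ne_zero 3 hb) (coeff_det_ne_zero_of_linearIndependent hp hq hind)
      using 1
    ring
  · simp only [planeAffineMap_apply, parabola, eval_of_degree_le_two hp, eval_of_degree_le_two hq]
    ext <;> ring

end QuadraticCurve

lemma affineMap_injective_of_det_ne_zero {E : Type*} [AddCommGroup E] [Module ℝ E]
    [FiniteDimensional ℝ E] {Φ : E →ᵃ[ℝ] E} (hΦ : LinearMap.det Φ.linear ≠ 0) :
    Function.Injective Φ :=
  (AffineMap.linear_injective_iff Φ).1 (LinearMap.equivOfDetNeZero Φ.linear hΦ).injective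

lemma strictMono_fin_cast (m : ℕ) : StrictMono fun i : Fin m ↦ (i : ℝ) :=
  Nat.strictMono_cast.comp Fin.val_strictMono

lemma isCubicWeight_triArea {m : ℕ} (Φ : (ℝ × ℝ) →ᵃ[ℝ] (ℝ × ℝ)) :
    IsCubicWeight (|LinearMap.det Φ.linear| / 2)
      (triArea (Φ ∘ parabola ∘ fun i : Fin m ↦ (i : ℝ))) := by
  intro x y z hxy hyz
  rw [triArea_comp, triArea_parabola_triple (strictMono_fin_cast m).monotone hxy.le hyz.le]
  ring

/-- For `n+3` equally spaced points on a nondegenerate quadratic plane curve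
and any affinely independent choice of vectors `f i` in `ℝ^{n+2}` (the
vertices of an `(n+2)`-simplex), all GKZ vectors of triangulations lie on a
common ellipsoid: some invertible affine map sends them all to a sphere of
radius `r > 0` around the origin. -/
theorem gkz_on_common_ellipsoid (n : ℕ) (p q : Polynomial ℝ)
    (hp : p.degree ≤ 2) (hq : q.degree ≤ 2)
    (hind : LinearIndependent ℝ ![p, q, (1 : Polynomial ℝ)])
    (a b : ℝ) (hb : b ≠ 0)
    (v : Fin (n + 3) → ℝ × ℝ)
    (hv : ∀ i : Fin (n + 3),
      v i = (p.eval (a + (i : ℕ) * b), q.eval (a + (i : ℕ) * b)))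
    (f : Fin (n + 3) → EuclideanSpace ℝ (Fin (n + 2)))
    (hf : AffineIndependent ℝ f) :
    ∃ M : EuclideanSpace ℝ (Fin (n + 2)) ≃ᵃ[ℝ] EuclideanSpace ℝ (Fin (n + 2)),
      ∃ r : ℝ, 0 < r ∧
        ∀ T : Finset (Finset (Fin (n + 3))), IsTriangulation v T →
          ‖M (GKZ v f T)‖ = r := by
  obtain ⟨Φ, hΦ, hΦv⟩ := exists_affineMap_parabola hp hq hind a hb
  obtain rfl : v = Φ ∘ parabola ∘ fun i : Fin (n + 3) ↦ (i : ℝ) :=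
    funext fun i ↦ (hv i).trans (hΦv i)
  have hA := isCubicWeight_triArea (m := n + 3) Φ
  set C := |LinearMap.det Φ.linear| / 2
  have hC : 0 < C := half_pos (abs_pos.2 hΦ)
  obtain ⟨M, hM⟩ := exists_affineEquiv_partialSum (finrank_euclideanSpace_fin (𝕜 := ℝ)) hf
    (C * (((n + 2 : ℕ) : ℝ) ^ 3 - (n + 2 : ℕ)))
  refine ⟨M, √(C ^ 2 * cumWeightSqSum (n + 2 : ℕ)), ?_, fun T hT ↦ ?_⟩
  · exact Real.sqrt_pos.2 (mul_pos (pow_pos hC 2) (cumWeightSqSum_pos (by simp)))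
  have hpoly : IsPolygonTriangulation 0 (Fin.last (n + 2)) T :=
    (hT.of_comp (affineMap_injective_of_det_ne_zero hΦ)).isPolygonTriangulation
      (strictMono_fin_cast _)
  rw [EuclideanSpace.norm_eq, GKZ_eq_sum_gkzCoord]
  simp only [hM _ (hpoly.sum_gkzCoord hA), Real.norm_eq_abs, sq_abs, sum_Iic_gkzCoord]
  rw [hpoly.sum_cumWeight_castSucc_sq hA]
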